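/- Let (X₁, X₂) be bivariate normal with non-degenerate benchmark Y = α₁X₁ + α₂X₂. For any 0 ≤ a < b ≤ 1 and A = A(a,b), the conditional covariance satisfies: Cov[X₁, X₂ | Y ∈ A] = r + (Cov(Y, X₁)·Cov(Y, X₂)/Var(Y))·(λ_{A,2} − λ_{A,1}² − 1). -/

import Mathlib

open MeasureTheory ProbabilityTheory Filter Set

noncomputable section

/-- Covariance of two real random variables under the measure `m`. -/
def covar {Ω : Type*} [MeasurableSpace Ω] (m : Measure Ω) (f g : Ω → ℝ) : ℝ :=
  ∫ ω, (f ω - ∫ x, f x ∂m) * (g ω - ∫ x, g x ∂m) ∂m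

/-- Generalized inverse of the CDF of a measure on `ℝ`, `F⁻¹(p) = inf {y | F(y) ≥ p}`,
with values in `EReal` (`⊥` at `p = 0` and `⊤` at `p = 1` for fully supported laws). -/
def invCDF (μ : Measure ℝ) (p : ℝ) : EReal :=
  sInf ((fun x : ℝ => (x : EReal)) '' {x : ℝ | p ≤ cdf μ x})

/-- Quantile conditioning set `A(a,b) = {y : F⁻¹(a) < y < F⁻¹(b)}`. -/
def qSet (μ : Measure ℝ) (a b : ℝ) : Set ℝ :=
  {y : ℝ | invCDF μ a < (y : EReal) ∧ (y : EReal) < invCDF μ b}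

/-- `λ_{A,1} = E[V | V ∈ A_V]`, the first conditional moment of a standard normal on the
quantile set `A_V = (Φ⁻¹(a), Φ⁻¹(b))`. -/
def lambdaA1 (a b : ℝ) : ℝ :=
  ∫ x, x ∂((gaussianReal 0 1)[|qSet (gaussianReal 0 1) a b])

/-- `λ_{A,2} = E[V² | V ∈ A_V]`, the second conditional moment of a standard normal on the
quantile set `A_V = (Φ⁻¹(a), Φ⁻¹(b))`. -/
def lambdaA2 (a b : ℝ) : ℝ :=
  ∫ x, x ^ 2 ∂((gaussianReal 0 1)[|qSet (gaussianReal 0 1) a b])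

/-! ### Generalized inverses and quantile sets -/

theorem invCDF_lt_coe_iff (μ : Measure ℝ) (p y : ℝ) :
    invCDF μ p < (y : EReal) ↔ ∃ x < y, p ≤ cdf μ x := by
  simp [invCDF, sInf_lt_iff, and_comm]

theorem invCDF_le_coe_iff (μ : Measure ℝ) (p y : ℝ) :
    invCDF μ p ≤ (y : EReal) ↔ ∀ z > y, p ≤ cdf μ z := by
  constructor
  · intro h z hz
    obtain ⟨x, hxz, hx⟩ := (invCDF_lt_coe_iff μ p z).1 (h.trans_lt (EReal.coe_lt_coe_iff.2 hz))
    exact hx.trans (monotone_cdf μ hxz.le)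
  · intro h
    by_contra! hlt
    obtain ⟨z, hyz, hz⟩ := EReal.lt_iff_exists_real_btwn.1 hlt
    rw [EReal.coe_lt_coe_iff] at hyz
    exact hz.not_ge (sInf_le ⟨z, h z hyz, rfl⟩)

theorem mem_qSet_iff (μ : Measure ℝ) (a b y : ℝ) :
    y ∈ qSet μ a b ↔ (∃ x < y, a ≤ cdf μ x) ∧ ∃ z > y, cdf μ z < b := by
  rw [qSet, mem_ofPred_eq, invCDF_lt_coe_iff, ← not_le, invCDF_le_coe_iff]
  push Not
  rfl

theorem measurableSet_qSet (μ : Measure ℝ) (a b : ℝ) : MeasurableSet (qSet μ a b) :=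
  measurable_coe_real_ereal measurableSet_Ioo

theorem cdf_map_affine (μ : Measure ℝ) [IsProbabilityMeasure μ] {s : ℝ} (hs : 0 < s) (m x : ℝ) :
    cdf (μ.map fun t => m + s * t) (m + s * x) = cdf μ x := by
  have hm : Measurable fun t : ℝ => m + s * t := by fun_prop
  have := Measure.isProbabilityMeasure_map (μ := μ) hm.aemeasurable
  rw [cdf_eq_real, cdf_eq_real, map_measureReal_apply hm measurableSet_Iic]
  congr 1
  ext t
  simp [hs]

theorem affine_mem_qSet_map_iff (μ : Measure ℝ) [IsProbabilityMeasure μ] {s : ℝ} (hs : 0 < s)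
    (m a b y : ℝ) : m + s * y ∈ qSet (μ.map fun t => m + s * t) a b ↔ y ∈ qSet μ a b := by
  have hsurj : Function.Surjective fun t : ℝ => m + s * t := fun u =>
    ⟨(u - m) / s, by field_simp; ring⟩
  rw [mem_qSet_iff, mem_qSet_iff]
  refine and_congr (hsurj.exists.trans ?_) (hsurj.exists.trans ?_) <;>
    simp only [cdf_map_affine μ hs, gt_iff_lt, add_lt_add_iff_left, mul_lt_mul_iff_right₀ hs]

theorem continuous_cdf (μ : Measure ℝ) [IsProbabilityMeasure μ] [NullSingletonClass μ] :
    Continuous (cdf μ) := by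
  refine continuous_iff_continuousAt.2 fun x => ?_
  rw [(monotone_cdf μ).continuousAt_iff_leftLim_eq_rightLim, StieltjesFunction.rightLim_eq]
  refine le_antisymm ((monotone_cdf μ).leftLim_le le_rfl) ?_
  have h := (cdf μ).measure_singleton x
  rw [measure_cdf, measure_singleton] at h
  linarith [ENNReal.ofReal_eq_zero.1 h.symm]

theorem measure_qSet_ne_zero (μ : Measure ℝ) [IsProbabilityMeasure μ] [NullSingletonClass μ]
    (hμ : volume ≪ μ) {a b : ℝ} (ha : 0 ≤ a) (hab : a < b) (hb : b ≤ 1) :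
    μ (qSet μ a b) ≠ 0 := by
  have hcont := continuous_cdf μ
  obtain ⟨x, hx⟩ : ∃ x, cdf μ x = (a + b) / 2 := by
    refine mem_range_of_exists_le_of_exists_ge hcont ?_ ?_
    · exact (((tendsto_cdf_atBot μ).eventually_lt_const (by linarith)).exists).imp
        fun _ => le_of_lt
    · exact (((tendsto_cdf_atTop μ).eventually_const_lt (by linarith)).exists).imp
        fun _ => le_of_lt
  have hopen : IsOpen (cdf μ ⁻¹' Ioo a b) := isOpen_Ioo.preimage hcont
  obtain ⟨l, u, hxlu, hlu⟩ := mem_nhds_iff_exists_Ioo_subset.1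
    (hopen.mem_nhds (show cdf μ x ∈ Ioo a b from ⟨by linarith, by linarith⟩))
  have hsub : Ioo l u ⊆ qSet μ a b := by
    intro y hy
    obtain ⟨y₁, hly₁, hy₁⟩ := exists_between hy.1
    obtain ⟨y₂, hy₂, hy₂u⟩ := exists_between hy.2
    exact (mem_qSet_iff μ a b y).2
      ⟨⟨y₁, hy₁, (hlu ⟨hly₁, hy₁.trans hy.2⟩).1.le⟩, y₂, hy₂, (hlu ⟨hy.1.trans hy₂, hy₂u⟩).2⟩
  intro h0
  have hvol := hμ (measure_mono_null hsub h0)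
  rw [Real.volume_Ioo, ENNReal.ofReal_eq_zero] at hvol
  linarith [hxlu.1, hxlu.2]

/-! ### Conditioning on an event generated by an independent variable -/

section Cond

variable {Ω : Type*} [MeasurableSpace Ω] {P : Measure Ω}

theorem map_cond_preimage {V : Ω → ℝ} (hV : Measurable V) {B : Set ℝ} (hB : MeasurableSet B) :
    (P[|V ⁻¹' B]).map V = (P.map V)[|B] := by
  rw [ProbabilityTheory.cond, ProbabilityTheory.cond, Measure.map_smul, Measure.map_apply hV hB, Measure.restrict_map hV hB]

theorem memLp_cond {f : Ω → ℝ} {p : ENNReal} (hf : MemLp f p P) {s : Set Ω} (hs : P s ≠ 0) :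
    MemLp f p (P[|s]) :=
  (hf.restrict s).smul_measure (ENNReal.inv_ne_top.2 hs)

variable [IsProbabilityMeasure P] {W V : Ω → ℝ} {B : Set ℝ}

theorem IndepFun.map_cond_preimage (h : IndepFun W V P) (hW : Measurable W) (hV : Measurable V)
    (hB : MeasurableSet B) (hpos : P (V ⁻¹' B) ≠ 0) : (P[|V ⁻¹' B]).map W = P.map W := by
  ext s hs
  rw [Measure.map_apply hW hs, Measure.map_apply hW hs, cond_apply (hV hB), inter_comm,
    h.measure_inter_preimage_eq_mul _ _ hs hB, mul_comm (P _), ← mul_assoc,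
    ENNReal.inv_mul_cancel hpos (measure_ne_top _ _), one_mul]

theorem IndepFun.cond_preimage (h : IndepFun W V P) (hW : Measurable W) (hV : Measurable V)
    (hB : MeasurableSet B) (hpos : P (V ⁻¹' B) ≠ 0) : IndepFun W V (P[|V ⁻¹' B]) := by
  refine indepFun_iff_measure_inter_preimage_eq_mul.2 fun s t hs ht => ?_
  rw [← Measure.map_apply hW hs, IndepFun.map_cond_preimage h hW hV hB hpos,
    Measure.map_apply hW hs, cond_apply (hV hB), cond_apply (hV hB), inter_left_comm,
    ← preimage_inter, h.measure_inter_preimage_eq_mul _ _ hs (hB.inter ht), mul_left_comm]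

end Cond

/-! ### Conditional variance of a Gaussian pair -/

theorem hasGaussianLaw_prodMk_of_linear_combination {Ω : Type*} [MeasurableSpace Ω] {P : Measure Ω}
    {X Y : Ω → ℝ} (hX : Measurable X) (hY : Measurable Y)
    (h : ∀ c d : ℝ, HasGaussianLaw (fun ω => c * X ω + d * Y ω) P) :
    HasGaussianLaw (fun ω => (X ω, Y ω)) P := by
  refine ⟨⟨fun L => ?_⟩⟩
  have hXY : Measurable fun ω => (X ω, Y ω) := hX.prodMk hY
  have hL : (L ∘ fun ω => (X ω, Y ω)) = fun ω => L (1, 0) * X ω + L (0, 1) * Y ω := by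
    ext ω
    have : (X ω, Y ω) = X ω • ((1 : ℝ), (0 : ℝ)) + Y ω • ((0 : ℝ), (1 : ℝ)) := by simp
    simp only [Function.comp_apply]
    rw [this, map_add, map_smul, map_smul, smul_eq_mul, smul_eq_mul]
    ring
  rw [Measure.map_map (by fun_prop) hXY, integral_map hXY.aemeasurable (by fun_prop),
    variance_map (by fun_prop) hXY.aemeasurable]
  change _ = gaussianReal (∫ ω, (L ∘ fun ω => (X ω, Y ω)) ω ∂P) _
  rw [hL]
  exact (h _ _).map_eq_gaussianReal

theorem variance_id_cond_qSet_gaussianReal {a b : ℝ} (ha : 0 ≤ a) (hab : a < b) (hb : b ≤ 1) :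
    Var[id; (gaussianReal 0 1)[|qSet (gaussianReal 0 1) a b]]
      = lambdaA2 a b - lambdaA1 a b ^ 2 := by
  have := nullSingletonClass_gaussianReal (μ := 0) one_ne_zero
  have hpos := measure_qSet_ne_zero (gaussianReal 0 1)
    (gaussianReal_absolutelyContinuous' 0 one_ne_zero) ha hab hb
  have := cond_isProbabilityMeasure hpos
  rw [variance_eq_sub (memLp_cond (memLp_id_gaussianReal 2) hpos)]
  rfl

theorem variance_cond_qSet {Ω : Type*} [MeasurableSpace Ω] {P : Measure Ω} {X Y : Ω → ℝ}
    (hX : Measurable X) (hY : Measurable Y) (hXY : HasGaussianLaw (fun ω => (X ω, Y ω)) P)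
    (hvar : 0 < Var[Y; P]) {a b : ℝ} (ha : 0 ≤ a) (hab : a < b) (hb : b ≤ 1) :
    P (Y ⁻¹' qSet (P.map Y) a b) ≠ 0 ∧
    Var[X; P[|Y ⁻¹' qSet (P.map Y) a b]]
      = Var[X; P] + cov[Y, X; P] ^ 2 / Var[Y; P] * (lambdaA2 a b - lambdaA1 a b ^ 2 - 1) := by
  have := hXY.isProbabilityMeasure
  have hX2 := hXY.fst.memLp_two
  have hY2 := hXY.snd.memLp_two
  set m := ∫ ω, Y ω ∂P
  set v := Var[Y; P]
  set s := √v
  have hs : 0 < s := Real.sqrt_pos.2 hvar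
  have hs2 : s ^ 2 = v := Real.sq_sqrt hvar.le
  set γ := gaussianReal 0 1
  have := nullSingletonClass_gaussianReal (μ := 0) one_ne_zero
  set V : Ω → ℝ := fun ω => (Y ω - m) / s with hVdef
  have hV : Measurable V := by fun_prop
  have hYV : Y = fun ω => m + s * V ω := by
    ext ω
    simp only [hVdef]
    field_simp
    ring
  have hmapV : P.map V = γ := by
    have hcomp : V = (fun t => (t - m) / s) ∘ Y := rfl
    have hcomp' : (fun t : ℝ => (t - m) / s) = (fun t => t / s) ∘ fun t => t - m := rfl
    rw [hcomp, ← Measure.map_map (by fun_prop) hY, hXY.snd.map_eq_gaussianReal, hcomp',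
      ← Measure.map_map (by fun_prop) (by fun_prop), gaussianReal_map_sub_const,
      gaussianReal_map_div_const]
    congr 1
    · simp [m]
    · ext
      simp [hs2, v, hvar.le, hvar.ne']
  have hmapY : P.map Y = γ.map fun t => m + s * t := by
    conv_lhs => rw [hYV]
    rw [← hmapV, Measure.map_map (by fun_prop) hV]
    rfl
  have hset : Y ⁻¹' qSet (P.map Y) a b = V ⁻¹' qSet γ a b := by
    ext ω
    rw [mem_preimage, mem_preimage, hmapY, ← affine_mem_qSet_map_iff γ hs m a b (V ω)]
    conv_lhs => rw [hYV]
  rw [hset]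
  have hB := measurableSet_qSet γ a b
  have hpos : P (V ⁻¹' qSet γ a b) ≠ 0 := by
    rw [← Measure.map_apply hV hB, hmapV]
    exact measure_qSet_ne_zero γ (gaussianReal_absolutelyContinuous' 0 one_ne_zero) ha hab hb
  refine ⟨hpos, ?_⟩
  have := cond_isProbabilityMeasure hpos
  set Q := P[|V ⁻¹' qSet γ a b]
  set c := cov[Y, X; P] / v
  set W : Ω → ℝ := fun ω => X ω - c * Y ω
  have hW : Measurable W := by fun_prop
  have hWV : IndepFun W V P := by
    have hWY : IndepFun W Y P := by
      refine HasGaussianLaw.indepFun_of_covariance_eq_zero ?_ ?_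
      · exact hXY.map_fun ((ContinuousLinearMap.fst ℝ ℝ ℝ - c • ContinuousLinearMap.snd ℝ ℝ ℝ).prod
          (ContinuousLinearMap.snd ℝ ℝ ℝ))
      · rw [covariance_fun_sub_left hX2 (hY2.const_mul c) hY2, covariance_const_mul_left,
          covariance_self hY.aemeasurable, covariance_comm]
        change _ - cov[Y, X; P] / v * v = 0
        field_simp
        ring
    exact hWY.comp measurable_id (show Measurable fun t => (t - m) / s by fun_prop)
  have hW2 : MemLp W 2 P := hX2.sub (hY2.const_mul c)
  have hV2 : MemLp V 2 P := by
    have : MemLp (fun ω => s⁻¹ * (Y ω - m)) 2 P := (hY2.sub (memLp_const m)).const_mul s⁻¹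
    simpa only [hVdef, div_eq_inv_mul] using this
  have hXWV : X = fun ω => c * m + (W ω + c * s * V ω) := by
    ext ω
    have := congrFun hYV ω
    simp only [W]
    linear_combination c * this
  have hvarX (R : Measure Ω) [IsProbabilityMeasure R] (hWR : MemLp W 2 R) (hVR : MemLp V 2 R)
      (hR : IndepFun W V R) : Var[X; R] = Var[W; R] + c ^ 2 * v * Var[V; R] := by
    rw [hXWV, variance_const_add (by fun_prop),
      IndepFun.variance_fun_add hWR (hVR.const_mul _)
        (hR.comp measurable_id (measurable_const_mul (c * s))),
      variance_const_mul, mul_pow, hs2]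
  have hvarV : Var[V; P] = 1 := by
    rw [← variance_id_map hV.aemeasurable, hmapV, variance_id_gaussianReal]
    simp
  have hvarVQ : Var[V; Q] = lambdaA2 a b - lambdaA1 a b ^ 2 := by
    rw [← variance_id_map hV.aemeasurable, map_cond_preimage hV hB, hmapV,
      variance_id_cond_qSet_gaussianReal ha hab hb]
  have hvarWQ : Var[W; Q] = Var[W; P] := by
    rw [← variance_id_map hW.aemeasurable, IndepFun.map_cond_preimage hWV hW hV hB hpos,
      variance_id_map hW.aemeasurable]
  have hc : cov[Y, X; P] ^ 2 / v = c ^ 2 * v := by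
    simp only [c]
    field_simp
  rw [hvarX Q (memLp_cond hW2 hpos) (memLp_cond hV2 hpos)
      (IndepFun.cond_preimage hWV hW hV hB hpos), hvarX P hW2 hV2 hWV, hvarV, hvarVQ, hvarWQ, hc]
  ring

theorem covariance_eq_polarization {Ω : Type*} [MeasurableSpace Ω] {P : Measure Ω}
    [IsFiniteMeasure P] {X₁ X₂ : Ω → ℝ} (h₁ : MemLp X₁ 2 P) (h₂ : MemLp X₂ 2 P) :
    cov[X₁, X₂; P] = (Var[fun ω => X₁ ω + X₂ ω; P] - Var[X₁; P] - Var[X₂; P]) / 2 := by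
  rw [variance_fun_add h₁ h₂]
  ring

/-- For a bivariate normal `(X₁, X₂)` with non-degenerate benchmark
`Y = α₁X₁ + α₂X₂` and any `0 ≤ a < b ≤ 1` with `A = A(a,b)`:
`Cov[X₁, X₂ | Y ∈ A] = r + (Cov(Y,X₁)·Cov(Y,X₂)/Var Y)·(λ_{A,2} − λ_{A,1}² − 1)`. -/
theorem conditional_covariance_bivariate_normal
    {Ω : Type*} [MeasureSpace Ω] [IsProbabilityMeasure (ℙ : Measure Ω)]
    (X₁ X₂ : Ω → ℝ) (hX₁ : Measurable X₁) (hX₂ : Measurable X₂)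
    (μ₁ μ₂ σ₁ σ₂ r ρ : ℝ) (hσ₁ : 0 < σ₁) (hσ₂ : 0 < σ₂)
    (hρ : ρ = r / (σ₁ * σ₂)) (hρmem : ρ ∈ Set.Ioo (-1 : ℝ) 1)
    (hGauss : ∀ c₁ c₂ : ℝ,
      (ℙ : Measure Ω).map (fun ω => c₁ * X₁ ω + c₂ * X₂ ω)
        = gaussianReal (c₁ * μ₁ + c₂ * μ₂)
            (Real.toNNReal (c₁ ^ 2 * σ₁ ^ 2 + 2 * c₁ * c₂ * r + c₂ ^ 2 * σ₂ ^ 2)))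
    (α₁ α₂ : ℝ) (hα : (α₁, α₂) ≠ (0, 0))
    (Y : Ω → ℝ) (hY : Y = fun ω => α₁ * X₁ ω + α₂ * X₂ ω)
    (hVarYpos : 0 < variance Y ℙ)
    (a b : ℝ) (ha : 0 ≤ a) (hab : a < b) (hb : b ≤ 1)
    (A : Set ℝ) (hA : A = qSet ((ℙ : Measure Ω).map Y) a b) :
    covar (ℙ[|Y ⁻¹' A]) X₁ X₂
      = r + covar ℙ Y X₁ * covar ℙ Y X₂ / variance Y ℙ
          * (lambdaA2 a b - (lambdaA1 a b) ^ 2 - 1) := by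
  have hr : |r| < σ₁ * σ₂ := by
    rw [hρ, mem_Ioo, ← abs_lt, abs_div, abs_of_pos (mul_pos hσ₁ hσ₂),
      div_lt_one (mul_pos hσ₁ hσ₂)] at hρmem
    exact hρmem
  have hr' := abs_lt.1 hr
  have hlin (c d : ℝ) : HasGaussianLaw (fun ω => c * X₁ ω + d * X₂ ω) (ℙ : Measure Ω) :=
    ⟨by rw [hGauss]; infer_instance⟩
  have hvar (c d : ℝ) (hnn : 0 ≤ c ^ 2 * σ₁ ^ 2 + 2 * c * d * r + d ^ 2 * σ₂ ^ 2) :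
      Var[fun ω => c * X₁ ω + d * X₂ ω; ℙ]
        = c ^ 2 * σ₁ ^ 2 + 2 * c * d * r + d ^ 2 * σ₂ ^ 2 := by
    rw [← variance_id_map (by fun_prop), hGauss, variance_id_gaussianReal,
      Real.coe_toNNReal _ hnn]
  have hv₁ : Var[X₁; ℙ] = σ₁ ^ 2 := by simpa using hvar 1 0 (by simp; positivity)
  have hv₂ : Var[X₂; ℙ] = σ₂ ^ 2 := by simpa using hvar 0 1 (by simp; positivity)
  have hv₁₂ : Var[fun ω => X₁ ω + X₂ ω; ℙ] = σ₁ ^ 2 + 2 * r + σ₂ ^ 2 := by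
    simpa using hvar 1 1 (by nlinarith [sq_nonneg (σ₁ - σ₂)])
  have hYm : Measurable Y := by rw [hY]; fun_prop
  have hpair (c d : ℝ) :
      HasGaussianLaw (fun ω => (c * X₁ ω + d * X₂ ω, Y ω)) (ℙ : Measure Ω) := by
    refine hasGaussianLaw_prodMk_of_linear_combination (by fun_prop) hYm fun e f => ?_
    convert! hlin (e * c + f * α₁) (e * d + f * α₂) using 2 with ω
    rw [hY]
    ring
  have hp₁ : HasGaussianLaw (fun ω => (X₁ ω, Y ω)) (ℙ : Measure Ω) := by simpa using hpair 1 0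
  have hp₂ : HasGaussianLaw (fun ω => (X₂ ω, Y ω)) (ℙ : Measure Ω) := by simpa using hpair 0 1
  have hp₁₂ : HasGaussianLaw (fun ω => (X₁ ω + X₂ ω, Y ω)) (ℙ : Measure Ω) := by
    simpa using hpair 1 1
  have hL₁ := hp₁.fst.memLp_two
  have hL₂ := hp₂.fst.memLp_two
  obtain ⟨hpos, hc₁⟩ := variance_cond_qSet hX₁ hYm hp₁ hVarYpos ha hab hb
  have hc₂ := (variance_cond_qSet hX₂ hYm hp₂ hVarYpos ha hab hb).2
  have hc₁₂ := (variance_cond_qSet (hX₁.add hX₂) hYm hp₁₂ hVarYpos ha hab hb).2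
  have hcovY : cov[Y, fun ω => X₁ ω + X₂ ω; ℙ] = cov[Y, X₁; ℙ] + cov[Y, X₂; ℙ] :=
    covariance_add_right hp₁.snd.memLp_two hL₁ hL₂
  change cov[X₁, X₂; ℙ[|Y ⁻¹' A]] = r + cov[Y, X₁; ℙ] * cov[Y, X₂; ℙ] / Var[Y; ℙ] * _
  rw [hA, covariance_eq_polarization (memLp_cond hL₁ hpos) (memLp_cond hL₂ hpos)]
  change (Var[X₁ + X₂; _] - _ - _) / 2 = _
  change Var[X₁ + X₂; _]
    = Var[fun ω => X₁ ω + X₂ ω; _] + cov[Y, fun ω => X₁ ω + X₂ ω; _] ^ 2 / _ * _ at hc₁₂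
  rw [hc₁₂, hc₁, hc₂, hv₁, hv₂, hv₁₂, hcovY]
  ring
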